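/- Watson's classical theorem expressed via Gamma functions, in the terminating case: for every natural number n and all complex numbers b and c such that the Gamma-function arguments on the right-hand side avoid the non-positive integers where required for the quotient to be defined (specifically, (b+1)/2, c + (1-b)/2, c + 1/2 + n and (b+1)/2 - n are not poles appearing in the denominator, and (a+1)/2 + k ≠ 0, 2c + k ≠ 0 for 0 ≤ k ≤ 2n-1 with a = -2n in the hypergeometric parameters), one has ∑_{k=0}^{2n} [(-2n)_k (b)_k (c)_k] / [((b+1-2n)/2)_k (2c)_k k!] = [Γ(1/2) Γ(c+1/2) Γ((b+1)/2 - n) Γ(c + (1-b)/2 + n)] / [Γ(1/2 - n) Γ((b+1)/2) Γ(c + 1/2 + n) Γ(c + (1-b)/2)], where (x)_k denotes the rising factorial and Γ is the complex Gamma function. -/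

import Mathlib

open Finset Complex

/-- The Pochhammer symbol (rising factorial) `(x)_k = x(x+1)⋯(x+k-1)` for a complex
number `x`, with `(x)_0 = 1`. -/
noncomputable def poch (x : ℂ) (k : ℕ) : ℂ := (ascPochhammer ℂ k).eval x

lemma poch_zero' (x : ℂ) : poch x 0 = 1 := by simp [poch]

lemma poch_succ (x : ℂ) (k : ℕ) : poch x (k + 1) = poch x k * (x + k) := by
  simp [poch, ascPochhammer_succ_right]

lemma poch_succ_left (x : ℂ) (k : ℕ) : poch x (k + 1) = x * poch (x + 1) k := by
  simp [poch, ascPochhammer_succ_left, Polynomial.eval_comp]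

lemma poch_ne_zero (x : ℂ) (k : ℕ) (h : ∀ j : ℕ, j < k → x + j ≠ 0) : poch x k ≠ 0 := by
  induction k with
  | zero => simp [poch_zero']
  | succ k ih =>
    rw [poch_succ]
    exact mul_ne_zero (ih fun j hj => h j (by omega)) (h k (by omega))

lemma poch_reflect (x : ℂ) (n : ℕ) : poch (1 - x - n) n = (-1) ^ n * poch x n := by
  induction n with
  | zero => simp [poch_zero']
  | succ n ih =>
    rw [poch_succ_left, poch_succ, show (1 - x - ((n + 1 : ℕ) : ℂ) + 1) = 1 - x - n by
      push_cast; ring, ih]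
    push_cast; ring

lemma gamma_add (x : ℂ) (n : ℕ) (h : ∀ j : ℕ, j < n → x + j ≠ 0) :
    Complex.Gamma (x + n) = poch x n * Complex.Gamma x := by
  induction n with
  | zero => simp [poch_zero']
  | succ n ih =>
    rw [poch_succ, show x + ((n + 1 : ℕ) : ℂ) = (x + n) + 1 by push_cast; ring,
      Complex.Gamma_add_one _ (h n (by omega)), ih fun j hj => h j (by omega)]
    ring

lemma poch_neg_zero (m k : ℕ) (h : m < k) : poch (-(m : ℂ)) k = 0 := by
  induction k with
  | zero => omega
  | succ k ih =>
    rw [poch_succ]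
    rcases Nat.lt_succ_iff_lt_or_eq.mp h with h | h
    · rw [ih h]; ring
    · subst h; ring

/-- The part of the summand independent of `n`. -/
noncomputable def wt (c d : ℂ) (k : ℕ) : ℂ :=
  poch c k / (poch d k * poch (2 * c) k * (Nat.factorial k : ℂ))

lemma wt_succ (c d : ℂ) (k : ℕ) (h1 : d + k ≠ 0) (h2 : 2 * c + k ≠ 0) :
    wt c d (k + 1) * ((d + k) * (2 * c + k) * (k + 1)) = wt c d k * (c + k) := by
  have h3 : (k + 1 : ℂ) ≠ 0 := by exact_mod_cast Nat.succ_ne_zero k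
  simp only [wt, poch_succ, Nat.factorial_succ, Nat.cast_mul, Nat.cast_add, Nat.cast_one]
  rw [show poch d k * (d + k) * (poch (2 * c) k * (2 * c + k)) * ((k + 1 : ℂ) * (k.factorial : ℂ))
    = (poch d k * poch (2 * c) k * (k.factorial : ℂ)) * ((d + k) * (2 * c + k) * (k + 1)) by ring,
    ← div_div, div_mul_cancel₀ _ (by simp [h1, h2, h3])]
  ring

lemma partial_sum (n c d : ℂ) (K : ℕ) (h1 : ∀ k : ℕ, k < K + 1 → d + k ≠ 0)
    (h2 : ∀ k : ℕ, k < K + 1 → 2 * c + k ≠ 0) :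
    ∑ k ∈ Finset.range (K + 2),
      ((c + 1 / 2 + n) * (d + n) * (poch (-2 * n - 2) k * poch (2 * d + 2 * n + 1) k)
        - (n + 1 / 2) * (d - c + n) * (poch (-2 * n) k * poch (2 * d + 2 * n - 1) k)) * wt c d k
      = -(2 * n + 1) * (d + n) * (2 * d + 4 * n + 1) *
        (poch (-2 * n) K * poch (2 * d + 2 * n + 1) K) * (c + K + 1) * wt c d (K + 1) := by
  induction K with
  | zero =>
    have e := wt_succ c d 0 (h1 0 (by omega)) (h2 0 (by omega))
    have hd : d ≠ 0 := by simpa using h1 0 (by omega)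
    have hc : c ≠ 0 := by simpa using h2 0 (by omega)
    have w0 : wt c d 0 = 1 := by simp [wt, poch_zero']
    have w1 : wt c d 1 * d * 2 = 1 := by
      rw [w0] at e
      apply mul_right_cancel₀ hc
      simp at e
      linear_combination e
    simp only [Finset.sum_range_succ, Finset.sum_range_zero, poch_succ, poch_zero', w0]
    simp only [zero_add, Nat.cast_zero]
    linear_combination (-((c + 1 / 2 + n) * (d + n) - (n + 1 / 2) * (d - c + n))) * w1
  | succ K ih =>
    rw [Finset.sum_range_succ, ih (fun k hk => h1 k (by omega)) (fun k hk => h2 k (by omega))]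
    have e := wt_succ c d (K + 1) (h1 _ (by omega)) (h2 _ (by omega))
    rw [show poch (-2 * n - 2) (K + 2) = (-2 * n - 2) * ((-2 * n - 1) * poch (-2 * n) K) by
        rw [poch_succ_left, poch_succ_left]; ring_nf,
      show poch (2 * d + 2 * n - 1) (K + 2) =
        (2 * d + 2 * n - 1) * ((2 * d + 2 * n) * poch (2 * d + 2 * n + 1) K) by
        rw [poch_succ_left, poch_succ_left]; ring_nf]
    simp only [poch_succ]
    push_cast at e ⊢
    linear_combination ((2 * n + 1) * (d + n) * (2 * d + 4 * n + 1) *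
        (poch (-2 * n) K * poch (2 * d + 2 * n + 1) K)) * e

lemma main_sum (c d : ℂ) (n : ℕ) (h1 : ∀ k : ℕ, k < 2 * n → d + k ≠ 0)
    (h2 : ∀ k : ℕ, k < 2 * n → 2 * c + k ≠ 0) :
    (∑ k ∈ Finset.range (2 * n + 1),
      (poch (-2 * n) k * poch (2 * d + 2 * n - 1) k) * wt c d k) *
      (poch (c + 1 / 2) n * poch d n) = poch (1 / 2) n * poch (d - c) n := by
  induction n with
  | zero => simp [poch_zero', wt]
  | succ n ih =>
    have ih := ih (fun k hk => h1 k (by omega)) (fun k hk => h2 k (by omega))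
    have P := partial_sum n c d (2 * n + 1) (fun k hk => h1 k (by omega))
      (fun k hk => h2 k (by omega))
    have z : ∀ k, 2 * n < k → poch (-2 * (n : ℂ)) k = 0 := by
      intro k hk
      have := poch_neg_zero (2 * n) k hk
      push_cast at this
      rwa [neg_mul]
    simp only [sub_mul, Finset.sum_sub_distrib, mul_assoc, ← Finset.mul_sum] at P
    rw [z (2 * n + 1) (by omega)] at P
    rw [Finset.sum_range_succ (fun k => poch (-2 * (n : ℂ)) k * _),
      Finset.sum_range_succ (fun k => poch (-2 * (n : ℂ)) k * _),
      z (2 * n + 1) (by omega), z (2 * n + 1 + 1) (by omega)] at P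
    simp only [mul_assoc] at ih
    rw [show 2 * (n + 1) + 1 = 2 * n + 1 + 2 by ring]
    have e1 : -2 * ((n + 1 : ℕ) : ℂ) = -2 * n - 2 := by push_cast; ring
    have e2 : 2 * d + 2 * ((n + 1 : ℕ) : ℂ) - 1 = 2 * d + 2 * n + 1 := by push_cast; ring
    rw [e1, e2]
    simp only [mul_assoc, poch_succ]
    linear_combination (poch (c + 1 / 2) n * poch d n) * P + (n + 1 / 2) * (d - c + n) * ih

/-- **Watson's classical theorem** expressed via Gamma functions, in the terminating
case `a = -2n`. -/
theorem watson_gamma (n : ℕ) (b c : ℂ)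
    (hb : ∀ m : ℕ, (b + 1) / 2 ≠ -(m : ℂ))
    (hcb : ∀ m : ℕ, c + (1 - b) / 2 ≠ -(m : ℂ))
    (hcn : ∀ m : ℕ, c + 1 / 2 + n ≠ -(m : ℂ))
    (hbn : ∀ m : ℕ, (b + 1) / 2 - n ≠ -(m : ℂ))
    (h₁ : ∀ k : ℕ, k < 2 * n → (b + 1 - 2 * n) / 2 + k ≠ 0)
    (h₂ : ∀ k : ℕ, k < 2 * n → 2 * c + k ≠ 0) :
    ∑ k ∈ Finset.range (2 * n + 1),
      (poch (-(2 * n : ℂ)) k * poch b k * poch c k) /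
        (poch ((b + 1 - 2 * n) / 2) k * poch (2 * c) k * (Nat.factorial k : ℂ)) =
      (Complex.Gamma (1 / 2) * Complex.Gamma (c + 1 / 2) *
        Complex.Gamma ((b + 1) / 2 - n) * Complex.Gamma (c + (1 - b) / 2 + n)) /
      (Complex.Gamma (1 / 2 - n) * Complex.Gamma ((b + 1) / 2) *
        Complex.Gamma (c + 1 / 2 + n) * Complex.Gamma (c + (1 - b) / 2)) := by
  obtain ⟨d, hd⟩ : ∃ d : ℂ, d = (b + 1) / 2 - n := ⟨_, rfl⟩
  have hb' : b = 2 * d + 2 * n - 1 := by rw [hd]; ring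
  have ed : (b + 1 - 2 * n) / 2 = d := by rw [hd]; ring
  have eb : (b + 1) / 2 = d + n := by rw [hd]; ring
  have ec : c + (1 - b) / 2 = 1 - (d - c) - n := by rw [hd]; ring
  rw [← hd] at hbn ⊢
  rw [ed] at h₁ ⊢
  rw [eb] at hb ⊢
  rw [ec] at hcb ⊢
  have hc : ∀ j : ℕ, j < n → c + 1 / 2 + j ≠ 0 := by
    intro j hj h
    apply h₂ (2 * j + 1) (by omega)
    push_cast
    linear_combination 2 * h
  have hd1 : ∀ j : ℕ, j < n → d + j ≠ 0 := fun j hj => h₁ j (by omega)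
  have hh : ∀ m : ℕ, (1 / 2 - n : ℂ) ≠ -(m : ℂ) := by
    intro m h
    have h' : ((2 * m + 1 : ℕ) : ℂ) = ((2 * n : ℕ) : ℂ) := by
      push_cast
      linear_combination 2 * h
    have := Nat.cast_injective h'
    omega
  have neg : ∀ x : ℂ, (∀ m : ℕ, x ≠ -(m : ℂ)) → ∀ j : ℕ, j < n → x + j ≠ 0 :=
    fun x hx j _ h => hx j (eq_neg_of_add_eq_zero_left h)
  have g1 := gamma_add (1 / 2 - n) n (neg _ hh)
  have g2 := gamma_add d n hd1
  have g3 := gamma_add (c + 1 / 2) n hc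
  have g4 := gamma_add (1 - (d - c) - n) n (neg _ hcb)
  have r1 := poch_reflect (1 / 2) n
  rw [show (1 - 1 / 2 - n : ℂ) = 1 / 2 - n by ring] at r1
  rw [sub_add_cancel, r1] at g1
  rw [poch_reflect] at g4
  have n1 := Complex.Gamma_ne_zero hh
  have n2 := Complex.Gamma_ne_zero hbn
  have n3 := Complex.Gamma_ne_zero hcn
  have n4 := Complex.Gamma_ne_zero hcb
  have p1 := poch_ne_zero _ _ hc
  have p2 := poch_ne_zero _ _ hd1
  rw [g3] at n3
  have n3 := right_ne_zero_of_mul n3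
  have M := main_sum c d n h₁ h₂
  rw [← eq_div_iff (mul_ne_zero p1 p2)] at M
  have S : ∑ k ∈ Finset.range (2 * n + 1),
      (poch (-(2 * n : ℂ)) k * poch b k * poch c k) /
        (poch d k * poch (2 * c) k * (Nat.factorial k : ℂ)) =
      ∑ k ∈ Finset.range (2 * n + 1),
      (poch (-2 * n) k * poch (2 * d + 2 * n - 1) k) * wt c d k := by
    refine Finset.sum_congr rfl fun k _ => ?_
    rw [wt, ← hb', neg_mul, mul_div_assoc]
  rw [S, M, g1, g2, g3, g4]
  have sq : ((-1 : ℂ) ^ n) * (-1) ^ n = 1 := by rw [← mul_pow]; simp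
  rw [div_eq_div_iff (mul_ne_zero p1 p2) (mul_ne_zero (mul_ne_zero (mul_ne_zero n1 (mul_ne_zero p2 n2)) (mul_ne_zero p1 n3)) n4)]
  generalize Complex.Gamma (1 / 2 - n) = G1
  generalize Complex.Gamma d = G2
  generalize Complex.Gamma (c + 1 / 2) = G3
  generalize Complex.Gamma (1 - (d - c) - n) = G4
  linear_combination (-(poch (1 / 2) n * poch (d - c) n * poch (c + 1 / 2) n * poch d n
    * G1 * G2 * G3 * G4)) * sq
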